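/- Let s ≥ 2, let ψ : [0,1]^{s-1} → ℝ≥0 be measurable with ψ ≤ L (0 < L < ∞), C = ∫_{[0,1]^{s-1}} ψ > 0, A = {z ∈ [0,1]^s : ψ(z_1,…,z_{s-1}) ≥ L z_s}, and assume ∂A admits an (s−1)-dimensional Minkowski content M_A ∈ (0,∞). For m ∈ ℕ let μ_m = ⊗_c Unif(Q_c) be the product of the uniform probability distributions on the M = m^s grid cubes Q_c, a probability measure on point configurations (x_c)_{c}. For a configuration, let N = #{c : x_c ∈ A} and let Y = (y_0,…,y_{N−1}) be the projections onto the first s−1 coordinates of those x_c lying in A. Then there exists m_0 such that for all m ≥ m_0, the weighted L_2 discrepancy satisfies E_{μ_m}[N² L_{2,N,ψ}²(Y)] ≤ 3 s^{1/2} M_A m^{s−1}, where L_{2,N,ψ}(Y) = (∫_{[0,1]^{s-1}} |(1/N) Σ_{n=0}^{N−1} 1_{[0,t)}(y_n) − (1/C) ∫_{[0,t)} ψ|² dt)^{1/2}. -/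

import Mathlib

open MeasureTheory Set Filter

/-- The half-open anchored box `[0,t) = ∏_j [0, t_j)`. -/
def lowerBox {d : ℕ} (t : Fin d → ℝ) : Set (Fin d → ℝ) :=
  {y | ∀ i, 0 ≤ y i ∧ y i < t i}

/-- The region `A = {z ∈ [0,1]^s : ψ(z_1,…,z_{s-1}) ≥ L z_s}` (with `s = d+1`). -/
def graphRegion {d : ℕ} (ψ : (Fin d → ℝ) → ℝ) (L : ℝ) : Set ((Fin d → ℝ) × ℝ) :=
  {z | z.1 ∈ Icc (0 : Fin d → ℝ) 1 ∧ z.2 ∈ Icc (0 : ℝ) 1 ∧ L * z.2 ≤ ψ z.1}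

/-- The test set `J_t* = ([0,t) × [0,1]) ∩ A`. -/
def Jstar {d : ℕ} (ψ : (Fin d → ℝ) → ℝ) (L : ℝ) (t : Fin d → ℝ) : Set ((Fin d → ℝ) × ℝ) :=
  (lowerBox t ×ˢ Icc (0 : ℝ) 1) ∩ graphRegion ψ L

/-- The closed Euclidean `ε`-neighborhood of a set `E ⊆ ℝ^{d} × ℝ = ℝ^{d+1}`. -/
def euclNbhdP {d : ℕ} (E : Set ((Fin d → ℝ) × ℝ)) (ε : ℝ) : Set ((Fin d → ℝ) × ℝ) :=
  {x | ∃ y ∈ E, Real.sqrt ((∑ i, (x.1 i - y.1 i) ^ 2) + (x.2 - y.2) ^ 2) ≤ ε}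

/-- `∂A` admits the `(s-1)`-dimensional Minkowski content `M` (with `s = d+1`). -/
def HasMinkowskiContentP {d : ℕ} (A : Set ((Fin d → ℝ) × ℝ)) (M : ℝ) : Prop :=
  Tendsto (fun ε : ℝ => (volume (euclNbhdP (frontier A) ε)).toReal / (2 * ε))
    (nhdsWithin 0 (Set.Ioi 0)) (nhds M)

/-- The grid cube `Q_c = ∏_{j=1}^{d+1} [c_j/m, (c_j+1)/m)`. -/
def gridCubeP {d m : ℕ} (c : (Fin d → Fin m) × Fin m) : Set ((Fin d → ℝ) × ℝ) :=
  {z | (∀ i, (c.1 i : ℝ) / m ≤ z.1 i ∧ z.1 i < ((c.1 i : ℝ) + 1) / m) ∧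
       ((c.2 : ℝ) / m ≤ z.2 ∧ z.2 < ((c.2 : ℝ) + 1) / m)}

/-- The stratified-input measure `μ_m = ⊗_c Unif(Q_c)`: the product over all grid cubes of
the uniform probability distribution on `Q_c`. -/
noncomputable def stratifiedMeasure (d m : ℕ) :
    Measure (((Fin d → Fin m) × Fin m) → (Fin d → ℝ) × ℝ) :=
  Measure.pi fun c => (volume (gridCubeP c))⁻¹ • volume.restrict (gridCubeP c)

/-!
At a fixed `t`, the number `N` of accepted points times the local discrepancy is a sum of
independent terms, one for each grid cube, whose means add up to zero. Hence its second moment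
is the sum of the variances over the cubes, and each variance is at most `1 / 4` since the term
takes values in an interval of length one. The variance vanishes unless the cube meets `∂A`, or
its base is cut by the boundary of the box `[0,t)`. A cube of the first kind lies in the
`√s / m`-neighbourhood of `∂A`, so the Minkowski content bounds their number by a constant times
`√s M_A m^{s-1}`. The number of cubes of the second kind, averaged over `t ∈ [0,1]^{s-1}`, is
`m (((m + 1) / 2)^{s-1} - ((m - 1) / 2)^{s-1}) ≤ 3 m^{s-1}`, because the sum over the bases of the
measures of the `t` involved factorises. This term is absorbed as well, since `∂A` contains the
bottom face of the cube and therefore `M_A ≥ 1`.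
-/

section ProductMeasures

open ProbabilityTheory

theorem variance_cond_eq_zero_of_forall_mem_eq {Ω : Type*} [MeasurableSpace Ω] {μ : Measure Ω}
    {s : Set Ω} (hs : MeasurableSet s) {f : Ω → ℝ} {a : ℝ} (hf : ∀ z ∈ s, f z = a) :
    Var[f; μ[|s]] = 0 := by
  have hae : f =ᵐ[μ[|s]] fun _ => a := ae_cond_of_forall_mem hs hf
  rw [variance_congr hae, variance_eq_integral aemeasurable_const]
  rcases eq_zero_or_isProbabilityMeasure μ[|s] with h | h
  · simp [h]
  · simp

theorem sum_integral_cond_of_measure_eq {ι Ω E : Type*} [Fintype ι] [MeasurableSpace Ω]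
    [NormedAddCommGroup E] [NormedSpace ℝ E] {μ : Measure Ω} {s : ι → Set Ω}
    (hs : ∀ i, MeasurableSet (s i)) (hdisj : Pairwise (Function.onFun Disjoint s))
    {v : ENNReal} (hv : ∀ i, μ (s i) = v) {f : Ω → E} (hf : IntegrableOn f (⋃ i, s i) μ) :
    ∑ i, ∫ x, f x ∂μ[|s i] = v.toReal⁻¹ • ∫ x in ⋃ i, s i, f x ∂μ := by
  rw [integral_iUnion_fintype hs hdisj fun i => hf.mono_set (subset_iUnion s i), Finset.smul_sum]
  simp only [ProbabilityTheory.cond, integral_smul_measure, hv, ENNReal.toReal_inv]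

variable {ι : Type*} [Fintype ι] {Ω : ι → Type*} [∀ i, MeasurableSpace (Ω i)]
  {μ : ∀ i, Measure (Ω i)} [∀ i, IsProbabilityMeasure (μ i)]

theorem integral_sq_sum_pi_eq_sum_variance {X : ∀ i, Ω i → ℝ} (hX : ∀ i, MemLp (X i) 2 (μ i))
    (hmean : ∑ i, ∫ x, X i x ∂μ i = 0) :
    ∫ ω, (∑ i, X i (ω i)) ^ 2 ∂Measure.pi μ = ∑ i, Var[X i; μ i] := by
  have hXint : ∀ i, Integrable (fun ω => X i (ω i)) (Measure.pi μ) := fun i =>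
    integrable_comp_eval ((hX i).integrable one_le_two)
  have hzero : ∫ ω, ∑ i, X i (ω i) ∂Measure.pi μ = 0 := by
    rw [integral_finsetSum _ fun i _ => hXint i, ← hmean]
    exact Finset.sum_congr rfl fun i _ => integral_comp_eval (hX i).aestronglyMeasurable
  rw [← variance_sum_pi hX, Finset.sum_fn, variance_of_integral_eq_zero _ hzero]
  exact (integrable_finsetSum _ fun i _ => hXint i).aemeasurable

theorem integral_integral_sq_sum_pi_eq {T : Type*} [MeasurableSpace T] {ν : Measure T}
    [IsFiniteMeasure ν] {X : ∀ i, T → Ω i → ℝ}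
    (hX : ∀ i, Measurable (Function.uncurry (X i))) {B : ℝ}
    (hB : ∀ᵐ t ∂ν, ∀ i x, |X i t x| ≤ B) (hmean : ∀ᵐ t ∂ν, ∑ i, ∫ x, X i t x ∂μ i = 0) :
    ∫ ω, ∫ t, (∑ i, X i t (ω i)) ^ 2 ∂ν ∂Measure.pi μ =
      ∫ t, ∑ i, Var[X i t; μ i] ∂ν := by
  have hmeas : Measurable fun q : (∀ i, Ω i) × T => (∑ i, X i q.2 (q.1 i)) ^ 2 := by
    have hcomp i : Measurable fun q : (∀ i, Ω i) × T => X i q.2 (q.1 i) :=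
      (hX i).comp (measurable_snd.prodMk ((measurable_pi_apply i).comp measurable_fst))
    exact (Finset.measurable_sum _ fun i _ => hcomp i).pow_const 2
  have hbound : ∀ᵐ q ∂(Measure.pi μ).prod ν,
      ‖(∑ i, X i q.2 (q.1 i)) ^ 2‖ ≤ (Fintype.card ι * B) ^ 2 := by
    filter_upwards [Measure.quasiMeasurePreserving_snd.ae hB] with q hq
    rw [norm_pow]
    gcongr
    exact (norm_sum_le_of_le _ fun i _ => hq i (q.1 i)).trans_eq (by simp)
  rw [integral_integral_swap (.of_bound hmeas.aestronglyMeasurable _ hbound)]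
  refine integral_congr_ae ?_
  filter_upwards [hB, hmean] with t hBt hmt
  refine integral_sq_sum_pi_eq_sum_variance (fun i => ?_) hmt
  exact .of_bound (hX i).of_uncurry_left.aestronglyMeasurable B (ae_of_all _ (hBt i))

end ProductMeasures

theorem subset_or_subset_compl_of_disjoint_frontier {X : Type*} [TopologicalSpace X]
    {s A : Set X} (hs : IsPreconnected s) (h : Disjoint s (frontier A)) : s ⊆ A ∨ s ⊆ Aᶜ := by
  have hcover : s ⊆ interior A ∪ interior Aᶜ := fun z hz => by
    have hz' : z ∉ closure A \ interior A := disjoint_left.1 h hz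
    rw [interior_compl]
    by_cases hA : z ∈ interior A
    · exact .inl hA
    · exact .inr fun hcl => hz' ⟨hcl, hA⟩
  refine (hs.subset_or_subset isOpen_interior isOpen_interior
    (disjoint_compl_right.mono interior_subset interior_subset) hcover).imp ?_ ?_ <;>
  exact fun hsub => hsub.trans interior_subset

theorem sum_indicator_one_comp_eq_natCard {ι α : Type*} [Fintype ι] (s : Set α) (f : ι → α) :
    ∑ i, s.indicator (fun _ => (1 : ℝ)) (f i) = Nat.card {i // f i ∈ s} := by
  classical
  simp [indicator_apply, Fintype.card_subtype]

instance isProbabilityMeasure_restrict_Icc_zero_one {ι : Type*} [Fintype ι] :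
    IsProbabilityMeasure (volume.restrict (Icc (0 : ι → ℝ) 1)) :=
  ⟨by simp [Real.volume_Icc_pi]⟩

section Grid

open ProbabilityTheory

variable {d m : ℕ}

theorem mem_Ico_div_iff_floor_eq (hm : 0 < m) (k : ℕ) (x : ℝ) :
    x ∈ Ico ((k : ℝ) / m) (((k : ℝ) + 1) / m) ↔ ⌊(m : ℝ) * x⌋ = k := by
  have hm' : (0 : ℝ) < m := by exact_mod_cast hm
  rw [Int.floor_eq_iff, mem_Ico, div_le_iff₀' hm', lt_div_iff₀' hm', Int.cast_natCast]

theorem exists_fin_mem_Ico_div_iff (hm : 0 < m) (x : ℝ) :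
    (∃ k : Fin m, x ∈ Ico ((k : ℝ) / m) (((k : ℝ) + 1) / m)) ↔ x ∈ Ico (0 : ℝ) 1 := by
  have hm' : (0 : ℝ) < m := by exact_mod_cast hm
  simp only [mem_Ico_div_iff_floor_eq hm]
  constructor
  · rintro ⟨k, hk⟩
    obtain ⟨hle, hlt⟩ := Int.floor_eq_iff.1 hk
    have hkm : ((k : ℤ) : ℝ) + 1 ≤ m := by exact_mod_cast k.2
    have hk0 : (0 : ℝ) ≤ (k : ℤ) := by positivity
    exact ⟨by nlinarith, by nlinarith⟩
  · rintro ⟨h0, h1⟩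
    have hfloor0 : 0 ≤ ⌊(m : ℝ) * x⌋ := Int.floor_nonneg.2 (by positivity)
    have hfloor1 : ⌊(m : ℝ) * x⌋ < m := Int.floor_lt.2 (by push_cast; nlinarith)
    exact ⟨⟨⌊(m : ℝ) * x⌋.toNat, by omega⟩, by simp [hfloor0]⟩

theorem gridCubeP_eq_prod (c : (Fin d → Fin m) × Fin m) :
    gridCubeP c = (univ.pi fun i => Ico ((c.1 i : ℝ) / m) (((c.1 i : ℝ) + 1) / m)) ×ˢ
      Ico ((c.2 : ℝ) / m) (((c.2 : ℝ) + 1) / m) := by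
  ext z
  simp [gridCubeP]

theorem measurableSet_gridCubeP (c : (Fin d → Fin m) × Fin m) : MeasurableSet (gridCubeP c) := by
  rw [gridCubeP_eq_prod]
  exact (MeasurableSet.univ_pi fun _ => measurableSet_Ico).prod measurableSet_Ico

theorem isPreconnected_gridCubeP (c : (Fin d → Fin m) × Fin m) :
    IsPreconnected (gridCubeP c) := by
  rw [gridCubeP_eq_prod]
  exact ((convex_pi fun _ _ => convex_Ico _ _).prod (convex_Ico _ _)).isPreconnected

theorem volume_gridCubeP (c : (Fin d → Fin m) × Fin m) :
    volume (gridCubeP c) = ((m : ENNReal) ^ (d + 1))⁻¹ := by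
  have hm : (0 : ℝ) < m := by exact_mod_cast c.2.pos
  have hside (a : ℝ) : ENNReal.ofReal ((a + 1) / m - a / m) = (m : ENNReal)⁻¹ := by
    rw [← sub_div, add_sub_cancel_left, one_div, ENNReal.ofReal_inv_of_pos hm,
      ENNReal.ofReal_natCast]
  rw [gridCubeP_eq_prod, Measure.volume_eq_prod, Measure.prod_prod, Real.volume_pi_Ico,
    Real.volume_Ico]
  simp only [hside, Finset.prod_const, Finset.card_univ, Fintype.card_fin, ← pow_succ,
    ENNReal.inv_pow]

theorem volume_gridCubeP_ne_top (c : (Fin d → Fin m) × Fin m) : volume (gridCubeP c) ≠ ⊤ := by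
  rw [volume_gridCubeP]
  have := c.2.pos.ne'
  simpa

instance isProbabilityMeasure_cond_gridCubeP (c : (Fin d → Fin m) × Fin m) :
    IsProbabilityMeasure (volume[|gridCubeP c]) :=
  cond_isProbabilityMeasure_of_finite (by simp [volume_gridCubeP]) (volume_gridCubeP_ne_top c)

theorem stratifiedMeasure_eq_pi_cond (d m : ℕ) :
    stratifiedMeasure d m = Measure.pi fun c => volume[|gridCubeP c] :=
  rfl

theorem pairwise_disjoint_gridCubeP :
    Pairwise (Function.onFun Disjoint (gridCubeP (d := d) (m := m))) := by
  intro c c' hne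
  refine disjoint_left.2 fun z hz hz' => hne ?_
  have hside (k k' : Fin m) (x : ℝ) (hk : x ∈ Ico ((k : ℝ) / m) (((k : ℝ) + 1) / m))
      (hk' : x ∈ Ico ((k' : ℝ) / m) (((k' : ℝ) + 1) / m)) : k = k' := by
    rw [mem_Ico_div_iff_floor_eq k.pos] at hk hk'
    exact Fin.ext (by exact_mod_cast hk.symm.trans hk')
  exact Prod.ext (funext fun i => hside _ _ _ (hz.1 i) (hz'.1 i)) (hside _ _ _ hz.2 hz'.2)

theorem iUnion_gridCubeP (hm : 0 < m) :
    ⋃ c, gridCubeP (d := d) (m := m) c = (univ.pi fun _ => Ico 0 1) ×ˢ Ico 0 1 := by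
  ext z
  simp only [gridCubeP_eq_prod, mem_iUnion, Prod.exists, mem_prod, mem_univ_pi, exists_and_left,
    exists_and_right, ← exists_fin_mem_Ico_div_iff hm, Classical.skolem]

theorem iUnion_gridCubeP_ae_eq_Icc (hm : 0 < m) :
    (⋃ c, gridCubeP (d := d) (m := m) c) =ᵐ[volume] Icc 0 1 := by
  rw [iUnion_gridCubeP hm, Icc_prod_eq, Measure.volume_eq_prod]
  exact Measure.set_prod_ae_eq Measure.univ_pi_Ico_ae_eq_Icc Ico_ae_eq_Icc

theorem sum_integral_cond_gridCubeP (hm : 0 < m) {f : (Fin d → ℝ) × ℝ → ℝ} (hf : Integrable f)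
    (hsupp : ∀ z ∉ Icc 0 1, f z = 0) :
    ∑ c : (Fin d → Fin m) × Fin m, ∫ z, f z ∂volume[|gridCubeP c] =
      (m : ℝ) ^ (d + 1) * ∫ z, f z := by
  rw [sum_integral_cond_of_measure_eq measurableSet_gridCubeP pairwise_disjoint_gridCubeP
      volume_gridCubeP hf.integrableOn, setIntegral_congr_set (iUnion_gridCubeP_ae_eq_Icc hm),
    setIntegral_eq_integral_of_forall_compl_eq_zero hsupp]
  simp

end Grid

section Neighborhood

variable {d m : ℕ} {E A : Set ((Fin d → ℝ) × ℝ)}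

theorem isBounded_euclNbhdP (hE : Bornology.IsBounded E) (ε : ℝ) :
    Bornology.IsBounded (euclNbhdP E ε) := by
  refine (hE.cthickening (δ := ε)).subset ?_
  rintro x ⟨y, hy, hxy⟩
  have hε : 0 ≤ ε := (Real.sqrt_nonneg _).trans hxy
  have hsq := (Real.sqrt_le_left hε).1 hxy
  refine Metric.mem_cthickening_of_dist_le x y ε E hy ?_
  rw [Prod.dist_eq, max_le_iff, dist_pi_le_iff hε]
  constructor
  · intro i
    have hi := Finset.single_le_sum (fun j _ => sq_nonneg (x.1 j - y.1 j)) (Finset.mem_univ i)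
    exact abs_le_of_sq_le_sq (by linarith [sq_nonneg (x.2 - y.2)]) hε
  · have hsum : 0 ≤ ∑ i, (x.1 i - y.1 i) ^ 2 := by positivity
    exact abs_le_of_sq_le_sq (by linarith) hε

theorem gridCubeP_subset_euclNbhdP {c : (Fin d → Fin m) × Fin m}
    (h : (gridCubeP c ∩ E).Nonempty) : gridCubeP c ⊆ euclNbhdP E (√(d + 1) / m) := by
  obtain ⟨y, hy, hyE⟩ := h
  refine fun x hx => ⟨y, hyE, Real.sqrt_le_iff.2 ⟨by positivity, ?_⟩⟩
  have hside {k a b : ℝ} (ha : k / m ≤ a ∧ a < (k + 1) / m) (hb : k / m ≤ b ∧ b < (k + 1) / m) :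
      (a - b) ^ 2 ≤ (1 / (m : ℝ)) ^ 2 := by
    rw [add_div] at ha hb
    exact sq_le_sq' (by linarith) (by linarith)
  calc ∑ i, (x.1 i - y.1 i) ^ 2 + (x.2 - y.2) ^ 2
      ≤ ∑ _i : Fin d, (1 / (m : ℝ)) ^ 2 + (1 / (m : ℝ)) ^ 2 :=
        add_le_add (Finset.sum_le_sum fun i _ => hside (hx.1 i) (hy.1 i)) (hside hx.2 hy.2)
    _ = (√(d + 1) / m) ^ 2 := by
        rw [div_pow (√_), Real.sq_sqrt (by positivity), Finset.sum_const, Finset.card_univ,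
          Fintype.card_fin, nsmul_eq_mul]
        ring

/-- The indices of the grid cubes of side `1 / m` that meet `E`. -/
def cubesMeeting (m : ℕ) (E : Set ((Fin d → ℝ) × ℝ)) : Set ((Fin d → Fin m) × Fin m) :=
  {c | (gridCubeP c ∩ E).Nonempty}

theorem natCard_cubesMeeting_le (hm : 0 < m) (hE : Bornology.IsBounded E) :
    (Nat.card (cubesMeeting m E) : ℝ) ≤
      (m : ℝ) ^ (d + 1) * volume.real (euclNbhdP E (√(d + 1) / m)) := by
  have hfin : (cubesMeeting m E).Finite := toFinite _
  have hvol : volume.real (⋃ c ∈ hfin.toFinset, gridCubeP c) =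
      Nat.card (cubesMeeting m E) * ((m : ℝ) ^ (d + 1))⁻¹ := by
    rw [measureReal_biUnion_finset (fun c _ c' _ hne => pairwise_disjoint_gridCubeP hne)
      (fun c _ => measurableSet_gridCubeP c) (fun c _ => volume_gridCubeP_ne_top c)]
    simp [measureReal_def, volume_gridCubeP, Nat.card_eq_card_finite_toFinset hfin]
  have hsub : (⋃ c ∈ hfin.toFinset, gridCubeP c) ⊆ euclNbhdP E (√(d + 1) / m) :=
    iUnion₂_subset fun c hc => gridCubeP_subset_euclNbhdP (hfin.mem_toFinset.1 hc)
  rw [← div_le_iff₀' (by positivity), div_eq_mul_inv, ← hvol]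
  exact measureReal_mono hsub (isBounded_euclNbhdP hE _).measure_lt_top.ne

theorem HasMinkowskiContentP.eventually_volume_euclNbhdP_le {M K r : ℝ}
    (h : HasMinkowskiContentP A M) (hMK : M < K) (hr : 0 < r) :
    ∀ᶠ m : ℕ in atTop, volume.real (euclNbhdP (frontier A) (r / m)) ≤ K * (2 * (r / m)) := by
  have hscale : Tendsto (fun m : ℕ => r / (m : ℝ)) atTop (nhdsWithin 0 (Ioi 0)) := by
    refine tendsto_nhdsWithin_iff.2 ⟨tendsto_const_div_atTop_nhds_zero_nat r, ?_⟩
    filter_upwards [eventually_gt_atTop 0] with m hm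
    exact div_pos hr (by exact_mod_cast hm)
  filter_upwards [(h.comp hscale).eventually (gt_mem_nhds hMK), eventually_gt_atTop 0]
    with m hratio hm
  exact ((div_lt_iff₀ (by positivity)).1 hratio).le

theorem HasMinkowskiContentP.one_le_of_Icc_prod_zero_subset {M : ℝ}
    (h : HasMinkowskiContentP A M) (hA : Bornology.IsBounded A)
    (hface : Icc 0 1 ×ˢ {0} ⊆ frontier A) : 1 ≤ M := by
  refine ge_of_tendsto h ?_
  filter_upwards [self_mem_nhdsWithin] with ε (hε : 0 < ε)
  have hslab : Icc 0 1 ×ˢ Icc (-ε) ε ⊆ euclNbhdP (frontier A) ε := by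
    rintro ⟨z, y⟩ ⟨hz, hy⟩
    refine ⟨(z, 0), hface ⟨hz, rfl⟩, ?_⟩
    simpa [Real.sqrt_sq_eq_abs] using abs_le.2 hy
  have hvol : volume.real (Icc (0 : Fin d → ℝ) 1 ×ˢ Icc (-ε) ε) = 2 * ε := by
    rw [Measure.volume_eq_prod, measureReal_prod_prod, Real.volume_real_Icc_of_le (by linarith),
      measureReal_def, Real.volume_Icc_pi_toReal zero_le_one]
    simp [two_mul]
  rw [le_div_iff₀ (by positivity), one_mul, ← hvol]
  have hfrontier := hA.closure.subset frontier_subset_closure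
  exact measureReal_mono hslab (isBounded_euclNbhdP hfrontier ε).measure_lt_top.ne

end Neighborhood

section Region

variable {d : ℕ} {ψ : (Fin d → ℝ) → ℝ} {L : ℝ}

theorem graphRegion_subset_Icc : graphRegion ψ L ⊆ Icc 0 1 :=
  fun _ hz => ⟨⟨hz.1.1, hz.2.1.1⟩, hz.1.2, hz.2.1.2⟩

theorem isBounded_graphRegion : Bornology.IsBounded (graphRegion ψ L) :=
  (Metric.isBounded_Icc 0 1).subset graphRegion_subset_Icc

theorem measurableSet_graphRegion (hmeas : Measurable ψ) : MeasurableSet (graphRegion ψ L) :=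
  (measurable_fst measurableSet_Icc).inter <| (measurable_snd measurableSet_Icc).inter <|
    measurableSet_le (measurable_snd.const_mul L) (hmeas.comp measurable_fst)

theorem Icc_prod_zero_subset_frontier_graphRegion (hψ : ∀ z ∈ Icc 0 1, 0 ≤ ψ z) :
    Icc 0 1 ×ˢ {0} ⊆ frontier (graphRegion ψ L) := by
  rintro ⟨z, y⟩ ⟨hz, rfl : y = 0⟩
  have hmem : (z, (0 : ℝ)) ∈ graphRegion ψ L := ⟨hz, by simp, by simpa using hψ z hz⟩
  have hlim : Tendsto (fun ε : ℝ => (z, ε)) (nhdsWithin 0 (Iio 0)) (nhds (z, 0)) :=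
    (Continuous.prodMk_right z).continuousAt.mono_left inf_le_left
  rw [frontier_eq_closure_inter_closure]
  refine ⟨subset_closure hmem, mem_closure_of_tendsto hlim ?_⟩
  filter_upwards [self_mem_nhdsWithin] with ε (hε : ε < 0) hA
  exact hε.not_ge hA.2.1.1

theorem Jstar_eq_inter (t : Fin d → ℝ) :
    Jstar ψ L t = graphRegion ψ L ∩ lowerBox t ×ˢ univ := by
  ext z
  simp only [Jstar, graphRegion, mem_inter_iff, mem_prod, mem_ofPred_eq, mem_univ]
  tauto

theorem lowerBox_subset_Icc {t : Fin d → ℝ} (ht : t ∈ Icc 0 1) : lowerBox t ⊆ Icc 0 1 :=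
  fun _ hy => ⟨fun i => (hy i).1, fun i => (hy i).2.le.trans (ht.2 i)⟩

theorem measurableSet_setOf_mem_lowerBox :
    MeasurableSet {q : (Fin d → ℝ) × (Fin d → ℝ) | q.2 ∈ lowerBox q.1} := by
  simp only [lowerBox, mem_ofPred_eq]
  measurability

theorem measurableSet_lowerBox (t : Fin d → ℝ) : MeasurableSet (lowerBox t) :=
  measurable_prodMk_left (x := t) measurableSet_setOf_mem_lowerBox

theorem preimage_mk_graphRegion (hL : 0 < L) {z : Fin d → ℝ} (hz : z ∈ Icc 0 1)
    (hψ : ψ z ≤ L) : Prod.mk z ⁻¹' graphRegion ψ L = Icc 0 (ψ z / L) := by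
  ext y
  constructor
  · rintro ⟨-, hy, hle⟩
    exact ⟨hy.1, (le_div_iff₀' hL).2 hle⟩
  · rintro ⟨hy, hle⟩
    exact ⟨hz, ⟨hy, hle.trans ((div_le_one hL).2 hψ)⟩, (le_div_iff₀' hL).1 hle⟩

theorem volume_real_graphRegion_inter (hmeas : Measurable ψ) (hL : 0 < L)
    (hψ : MapsTo ψ (Icc 0 1) (Icc 0 L)) {S : Set (Fin d → ℝ)} (hS : MeasurableSet S)
    (hSI : S ⊆ Icc 0 1) :
    volume.real (graphRegion ψ L ∩ S ×ˢ univ) = (∫ z in S, ψ z) / L := by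
  have hsection (z : Fin d → ℝ) :
      volume (Prod.mk z ⁻¹' (graphRegion ψ L ∩ S ×ˢ univ)) =
        S.indicator (fun z => ENNReal.ofReal (ψ z / L)) z := by
    by_cases hz : z ∈ S
    · rw [preimage_inter, mk_preimage_prod_right hz, inter_univ,
        preimage_mk_graphRegion hL (hSI hz) (hψ (hSI hz)).2, Real.volume_Icc, sub_zero,
        indicator_of_mem hz]
    · simp [hz]
  have hnonneg : ∀ᵐ z ∂volume.restrict S, 0 ≤ ψ z / L := by
    filter_upwards [ae_restrict_mem hS] with z hz
    exact div_nonneg (hψ (hSI hz)).1 hL.le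
  rw [measureReal_def, Measure.volume_eq_prod, Measure.prod_apply
    ((measurableSet_graphRegion hmeas).inter (hS.prod .univ))]
  simp only [hsection]
  rw [lintegral_indicator hS, ← integral_div, integral_eq_lintegral_of_nonneg_ae hnonneg
    (hmeas.div_const L).aestronglyMeasurable]

end Region

section LocalDiscrepancy

open ProbabilityTheory

variable {d : ℕ} {ψ : (Fin d → ℝ) → ℝ} {L : ℝ}

/-- The value `(1 / C) ∫_{[0,t)} ψ` at `t` of the distribution function with density
proportional to `ψ` on `[0,1]^d`; it is `0` when `C = ∫_{[0,1]^d} ψ = 0`. -/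
noncomputable def targetCDF (ψ : (Fin d → ℝ) → ℝ) (t : Fin d → ℝ) : ℝ :=
  (1 / ∫ z in Icc (0 : Fin d → ℝ) 1, ψ z) * ∫ z in lowerBox t, ψ z

/-- The contribution of a single input point `z` to `N` times the local discrepancy at `t`:
zero if `z` is rejected, and `1_{[0,t)} - (1 / C) ∫_{[0,t)} ψ` if it is accepted. -/
noncomputable def localDiscrepancy (ψ : (Fin d → ℝ) → ℝ) (L : ℝ) (t : Fin d → ℝ)
    (z : (Fin d → ℝ) × ℝ) : ℝ :=
  (Jstar ψ L t).indicator (fun _ => 1) z -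
    targetCDF ψ t * (graphRegion ψ L).indicator (fun _ => 1) z

/-- The quantity `N² L_{2,N,ψ}(Y)²` for the points `Y` accepted from the configuration `ω`;
the junk value `1 / 0 = 0` is harmless, since the factor `N²` makes it `0` for `N = 0`. -/
noncomputable def scaledSqDiscrepancy {ι : Type*} [Fintype ι] (ψ : (Fin d → ℝ) → ℝ) (L : ℝ)
    (ω : ι → (Fin d → ℝ) × ℝ) : ℝ :=
  (Nat.card {i // ω i ∈ graphRegion ψ L} : ℝ) ^ 2 *
    ∫ t in Icc (0 : Fin d → ℝ) 1,
      |(1 / (Nat.card {i // ω i ∈ graphRegion ψ L} : ℝ)) *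
          (∑ i, (Jstar ψ L t).indicator (fun _ => (1 : ℝ)) (ω i)) - targetCDF ψ t| ^ 2

theorem sq_mul_abs_one_div_mul_sub_sq {N S F : ℝ} (h : N = 0 → S = 0) :
    N ^ 2 * |1 / N * S - F| ^ 2 = (S - F * N) ^ 2 := by
  rw [sq_abs, ← mul_pow]
  rcases eq_or_ne N 0 with hN | hN
  · simp [hN, h hN]
  · field_simp

theorem scaledSqDiscrepancy_eq_integral {ι : Type*} [Fintype ι] (ω : ι → (Fin d → ℝ) × ℝ) :
    scaledSqDiscrepancy ψ L ω =
      ∫ t in Icc (0 : Fin d → ℝ) 1, (∑ i, localDiscrepancy ψ L t (ω i)) ^ 2 := by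
  rw [scaledSqDiscrepancy, ← integral_const_mul]
  congr 1 with t
  rw [sq_mul_abs_one_div_mul_sub_sq]
  · simp only [localDiscrepancy, Finset.sum_sub_distrib, ← Finset.mul_sum,
      sum_indicator_one_comp_eq_natCard (graphRegion ψ L)]
  · intro hN
    have hnone : IsEmpty {i // ω i ∈ graphRegion ψ L} :=
      Finite.card_eq_zero_iff.1 (by exact_mod_cast hN)
    exact Finset.sum_eq_zero fun i _ =>
      indicator_of_notMem (fun hi => hnone.false ⟨i, hi.2⟩) _

theorem targetCDF_mem_Icc (hψ0 : ∀ z ∈ Icc 0 1, 0 ≤ ψ z) (hψint : IntegrableOn ψ (Icc 0 1))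
    {t : Fin d → ℝ} (ht : t ∈ Icc 0 1) : targetCDF ψ t ∈ Icc 0 1 := by
  have hbox : 0 ≤ ∫ z in lowerBox t, ψ z :=
    setIntegral_nonneg (measurableSet_lowerBox t) fun z hz => hψ0 z (lowerBox_subset_Icc ht hz)
  have hcube : 0 ≤ ∫ z in Icc 0 1, ψ z := setIntegral_nonneg measurableSet_Icc hψ0
  have hmono : ∫ z in lowerBox t, ψ z ≤ ∫ z in Icc 0 1, ψ z :=
    setIntegral_mono_set hψint (ae_restrict_of_forall_mem measurableSet_Icc hψ0)
      (lowerBox_subset_Icc ht).eventuallyLE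
  rw [targetCDF, one_div_mul_eq_div]
  exact ⟨div_nonneg hbox hcube, div_le_one_of_le₀ hmono hcube⟩

theorem integrableOn_Icc_of_mapsTo (hmeas : Measurable ψ)
    (hψ : MapsTo ψ (Icc 0 1) (Icc 0 L)) : IntegrableOn ψ (Icc 0 1) :=
  .of_bound isCompact_Icc.measure_lt_top hmeas.aestronglyMeasurable L <|
    ae_restrict_of_forall_mem measurableSet_Icc fun _ hz =>
      (Real.norm_of_nonneg (hψ hz).1).trans_le (hψ hz).2

theorem targetCDF_mem_Icc_of_mapsTo (hmeas : Measurable ψ)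
    (hψ : MapsTo ψ (Icc 0 1) (Icc 0 L)) {t : Fin d → ℝ} (ht : t ∈ Icc 0 1) :
    targetCDF ψ t ∈ Icc 0 1 :=
  targetCDF_mem_Icc (fun _ hz => (hψ hz).1) (integrableOn_Icc_of_mapsTo hmeas hψ) ht

theorem measurable_targetCDF (hmeas : Measurable ψ) : Measurable (targetCDF ψ) := by
  have huncurry : Measurable
      ({q : (Fin d → ℝ) × (Fin d → ℝ) | q.2 ∈ lowerBox q.1}.indicator fun q => ψ q.2) :=
    (hmeas.comp measurable_snd).indicator measurableSet_setOf_mem_lowerBox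
  have hbox := huncurry.stronglyMeasurable.integral_prod_right' (ν := volume)
  have heq : (fun t => ∫ z in lowerBox t, ψ z) = fun t => ∫ z,
      {q : (Fin d → ℝ) × (Fin d → ℝ) | q.2 ∈ lowerBox q.1}.indicator (fun q => ψ q.2) (t, z) := by
    ext t
    rw [← integral_indicator (measurableSet_lowerBox t)]
    rfl
  exact (heq ▸ hbox.measurable).const_mul _

theorem measurable_uncurry_localDiscrepancy (hmeas : Measurable ψ) :
    Measurable (Function.uncurry (localDiscrepancy ψ L)) := by
  have hA : MeasurableSet {q : (Fin d → ℝ) × ((Fin d → ℝ) × ℝ) | q.2 ∈ graphRegion ψ L} :=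
    measurable_snd (measurableSet_graphRegion hmeas)
  have hbox : MeasurableSet {q : (Fin d → ℝ) × ((Fin d → ℝ) × ℝ) | q.2.1 ∈ lowerBox q.1} :=
    (measurable_fst.prodMk (measurable_fst.comp measurable_snd)) measurableSet_setOf_mem_lowerBox
  have hJ : MeasurableSet {q : (Fin d → ℝ) × ((Fin d → ℝ) × ℝ) | q.2 ∈ Jstar ψ L q.1} := by
    simp only [Jstar_eq_inter, mem_inter_iff, mem_prod, mem_univ, and_true]
    exact hA.inter hbox
  have hF : Measurable fun q : (Fin d → ℝ) × ((Fin d → ℝ) × ℝ) => targetCDF ψ q.1 :=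
    (measurable_targetCDF hmeas).comp measurable_fst
  exact (measurable_const.indicator hJ).sub (hF.mul (measurable_const.indicator hA))

theorem localDiscrepancy_mem_Icc {t : Fin d → ℝ} (hF : targetCDF ψ t ∈ Icc 0 1)
    (z : (Fin d → ℝ) × ℝ) :
    localDiscrepancy ψ L t z ∈ Icc (-targetCDF ψ t) (1 - targetCDF ψ t) := by
  obtain ⟨h0, h1⟩ := hF
  by_cases hA : z ∈ graphRegion ψ L <;> by_cases hbox : z.1 ∈ lowerBox t <;>
  simp [localDiscrepancy, Jstar_eq_inter, hA, hbox, h0, h1]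

theorem localDiscrepancy_eq_zero_of_notMem {z : (Fin d → ℝ) × ℝ} (hz : z ∉ graphRegion ψ L)
    (t : Fin d → ℝ) : localDiscrepancy ψ L t z = 0 := by
  simp [localDiscrepancy, Jstar, hz]

theorem measurableSet_Jstar (hmeas : Measurable ψ) (t : Fin d → ℝ) :
    MeasurableSet (Jstar ψ L t) :=
  ((measurableSet_lowerBox t).prod measurableSet_Icc).inter (measurableSet_graphRegion hmeas)

theorem integrable_indicator_Jstar (hmeas : Measurable ψ) (t : Fin d → ℝ) :
    Integrable ((Jstar ψ L t).indicator fun _ => (1 : ℝ)) :=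
  (integrable_indicator_iff (measurableSet_Jstar hmeas t)).2 <| integrableOn_const
    (isBounded_graphRegion.subset inter_subset_right).measure_lt_top.ne

theorem integrable_indicator_graphRegion (hmeas : Measurable ψ) :
    Integrable ((graphRegion ψ L).indicator fun _ => (1 : ℝ)) :=
  (integrable_indicator_iff (measurableSet_graphRegion hmeas)).2 <| integrableOn_const
    isBounded_graphRegion.measure_lt_top.ne

theorem integrable_localDiscrepancy (hmeas : Measurable ψ) (t : Fin d → ℝ) :
    Integrable (localDiscrepancy ψ L t) :=
  (integrable_indicator_Jstar hmeas t).sub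
    ((integrable_indicator_graphRegion hmeas).const_mul _)

theorem integral_localDiscrepancy_eq_zero (hmeas : Measurable ψ) (hL : 0 < L)
    (hψ : MapsTo ψ (Icc 0 1) (Icc 0 L)) (hC : ∫ z in Icc 0 1, ψ z ≠ 0) {t : Fin d → ℝ}
    (ht : t ∈ Icc 0 1) : ∫ z, localDiscrepancy ψ L t z = 0 := by
  have hJ : volume.real (Jstar ψ L t) = (∫ z in lowerBox t, ψ z) / L := by
    rw [Jstar_eq_inter, volume_real_graphRegion_inter hmeas hL hψ (measurableSet_lowerBox t)
      (lowerBox_subset_Icc ht)]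
  have hbase : graphRegion ψ L ⊆ Icc 0 1 ×ˢ univ := fun z hz => ⟨hz.1, trivial⟩
  have hA : volume.real (graphRegion ψ L) = (∫ z in Icc 0 1, ψ z) / L := by
    rw [← volume_real_graphRegion_inter hmeas hL hψ measurableSet_Icc Subset.rfl,
      inter_eq_left.2 hbase]
  simp only [localDiscrepancy]
  rw [integral_sub (integrable_indicator_Jstar hmeas t)
      ((integrable_indicator_graphRegion hmeas).const_mul _), integral_const_mul,
    integral_indicator_const _ (measurableSet_Jstar hmeas t),
    integral_indicator_const _ (measurableSet_graphRegion hmeas), hJ, hA, targetCDF,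
    smul_eq_mul, smul_eq_mul]
  field_simp
  ring

end LocalDiscrepancy

section CrossingBoxes

variable {d m : ℕ}

/-- The `t ∈ [0,1]^d` for which the anchored box `[0,t)` may cut the grid cell
`∏_j [k_j / m, (k_j + 1) / m)`, that is, neither contain it nor miss it. The strict inequality
`t_j > (k_j + 1) / m` also puts some boxes containing the cell here, a null set of `t`. -/
def crossingBoxes (k : Fin d → Fin m) : Set (Fin d → ℝ) :=
  (univ.pi fun j => Ioc ((k j : ℝ) / m) 1) \ univ.pi fun j => Ioc (((k j : ℝ) + 1) / m) 1

theorem measurableSet_crossingBoxes (k : Fin d → Fin m) : MeasurableSet (crossingBoxes k) :=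
  (MeasurableSet.univ_pi fun _ => measurableSet_Ioc).diff
    (.univ_pi fun _ => measurableSet_Ioc)

theorem crossingBoxes_subset_Icc (k : Fin d → Fin m) : crossingBoxes k ⊆ Icc 0 1 :=
  fun t ht => ⟨fun j => (by positivity : (0 : ℝ) ≤ k j / m).trans (ht.1 j trivial).1.le,
    fun j => (ht.1 j trivial).2⟩

theorem gridCubeP_subset_or_subset_compl_of_notMem_crossingBoxes
    {c : (Fin d → Fin m) × Fin m} {t : Fin d → ℝ} (ht : t ≤ 1) (hcross : t ∉ crossingBoxes c.1) :
    gridCubeP c ⊆ lowerBox t ×ˢ univ ∨ gridCubeP c ⊆ (lowerBox t ×ˢ univ)ᶜ := by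
  by_cases hmeet : ∀ j, (c.1 j : ℝ) / m < t j
  · refine .inl fun z hz => ⟨fun j => ⟨?_, ?_⟩, trivial⟩
    · exact (by positivity : (0 : ℝ) ≤ c.1 j / m).trans (hz.1 j).1
    · have hcontain := not_not.1 fun h => hcross ⟨fun i _ => ⟨hmeet i, ht i⟩, h⟩
      exact (hz.1 j).2.trans (hcontain j trivial).1
  · obtain ⟨j, hj⟩ := not_forall.1 hmeet
    exact .inr fun z hz hbox => hj ((hz.1 j).1.trans_lt (hbox.1 j).2)

theorem volume_real_crossingBoxes (k : Fin d → Fin m) :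
    volume.real (crossingBoxes k) =
      ∏ j, (1 - (k j : ℝ) / m) - ∏ j, (1 - ((k j : ℝ) + 1) / m) := by
  have hright (j : Fin d) : ((k j : ℝ) + 1) / m ≤ 1 :=
    div_le_one_of_le₀ (by exact_mod_cast (k j).2) (by positivity)
  have hleft (j : Fin d) : (k j : ℝ) / m ≤ ((k j : ℝ) + 1) / m := by gcongr; linarith
  have hsub : (univ.pi fun j => Ioc (((k j : ℝ) + 1) / m) 1) ⊆
      univ.pi fun j => Ioc ((k j : ℝ) / m) 1 :=
    pi_mono fun j _ => Ioc_subset_Ioc_left (hleft j)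
  have hfinite : volume (univ.pi fun j => Ioc ((k j : ℝ) / m) 1) ≠ ⊤ := by
    simp [Real.volume_pi_Ioc, ENNReal.prod_ne_top]
  rw [crossingBoxes, measureReal_sdiff hsub (.univ_pi fun _ => measurableSet_Ioc) hfinite,
    measureReal_def, measureReal_def, Real.volume_pi_Ioc_toReal fun j => (hleft j).trans (hright j),
    Real.volume_pi_Ioc_toReal hright]

theorem sum_one_sub_div (hm : 0 < m) : ∑ k : Fin m, (1 - (k : ℝ) / m) = ((m : ℝ) + 1) / 2 := by
  have hgauss : (∑ k : Fin m, (k : ℝ)) * 2 = m * (m - 1) := by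
    have h := Finset.sum_range_id_mul_two m
    rw [← Fin.sum_univ_eq_sum_range (fun k => k)] at h
    have h' := congrArg (Nat.cast (R := ℝ)) h
    push_cast [Nat.cast_pred hm] at h'
    exact h'
  rw [Finset.sum_sub_distrib, ← Finset.sum_div]
  simp only [Finset.sum_const, Finset.card_univ, Fintype.card_fin, nsmul_eq_mul, mul_one]
  field_simp
  linarith

theorem sum_volume_real_crossingBoxes (hm : 0 < m) :
    ∑ k : Fin d → Fin m, volume.real (crossingBoxes k) =
      (((m : ℝ) + 1) / 2) ^ d - (((m : ℝ) - 1) / 2) ^ d := by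
  have hupper : ∑ k : Fin m, (1 - ((k : ℝ) + 1) / m) = ((m : ℝ) - 1) / 2 := by
    simp only [add_div, ← sub_sub]
    rw [Finset.sum_sub_distrib, sum_one_sub_div hm]
    simp
    field_simp
    ring
  simp only [volume_real_crossingBoxes]
  rw [Finset.sum_sub_distrib, ← sum_one_sub_div hm, ← hupper, Fintype.sum_pow, Fintype.sum_pow]

theorem mul_half_pow_sub_half_pow_le {x : ℝ} (hx : 2 ≤ x) (d : ℕ) :
    x * (((x + 1) / 2) ^ d - ((x - 1) / 2) ^ d) ≤ 3 * x ^ d := by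
  rcases d with _ | d
  · simp
  have hbern : (d + 1) * (3 / 4 : ℝ) ^ d ≤ 3 := by
    have h := one_add_mul_le_pow (a := (1 / 3 : ℝ)) (by norm_num) d
    have hinv : (4 / 3 : ℝ) ^ d * (3 / 4) ^ d = 1 := by rw [← mul_pow]; norm_num
    nlinarith [pow_pos (by norm_num : (0 : ℝ) < 3 / 4) d]
  have hmax : max |(x + 1) / 2| |(x - 1) / 2| ≤ 3 / 4 * x := by
    rw [abs_of_nonneg (by linarith), abs_of_nonneg (by linarith)]
    exact max_le (by linarith) (by linarith)
  have hdiff : ((x + 1) / 2) ^ (d + 1) - ((x - 1) / 2) ^ (d + 1) ≤ 3 * x ^ d :=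
    calc ((x + 1) / 2) ^ (d + 1) - ((x - 1) / 2) ^ (d + 1)
        ≤ |(x + 1) / 2 - (x - 1) / 2| * (d + 1 : ℕ) * max |(x + 1) / 2| |(x - 1) / 2| ^ d :=
          (le_abs_self _).trans (abs_pow_sub_pow_le ..)
      _ = (d + 1) * max |(x + 1) / 2| |(x - 1) / 2| ^ d := by
          rw [show (x + 1) / 2 - (x - 1) / 2 = 1 by ring, abs_one, one_mul, Nat.cast_succ]
      _ ≤ (d + 1) * (3 / 4 * x) ^ d := by gcongr
      _ = (d + 1) * (3 / 4) ^ d * x ^ d := by rw [mul_pow, mul_assoc]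
      _ ≤ 3 * x ^ d := by gcongr
  calc x * (((x + 1) / 2) ^ (d + 1) - ((x - 1) / 2) ^ (d + 1))
      ≤ x * (3 * x ^ d) := by gcongr
    _ = 3 * x ^ (d + 1) := by ring

end CrossingBoxes

section Stratified

open ProbabilityTheory

variable {d m : ℕ} {ψ : (Fin d → ℝ) → ℝ} {L : ℝ}

theorem variance_localDiscrepancy_le_quarter (hmeas : Measurable ψ) {t : Fin d → ℝ}
    (hF : targetCDF ψ t ∈ Icc 0 1) (μ : Measure ((Fin d → ℝ) × ℝ)) [IsProbabilityMeasure μ] :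
    Var[localDiscrepancy ψ L t; μ] ≤ 1 / 4 := by
  refine (variance_le_sq_of_bounded (ae_of_all _ (localDiscrepancy_mem_Icc hF))
    (measurable_uncurry_localDiscrepancy hmeas).of_uncurry_left.aemeasurable).trans_eq ?_
  ring

theorem variance_localDiscrepancy_gridCubeP_eq_zero {c : (Fin d → Fin m) × Fin m}
    {t : Fin d → ℝ} (ht : t ≤ 1) (hc : c ∉ cubesMeeting m (frontier (graphRegion ψ L)))
    (hcross : t ∉ crossingBoxes c.1) :
    Var[localDiscrepancy ψ L t; volume[|gridCubeP c]] = 0 := by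
  have hdisj : Disjoint (gridCubeP c) (frontier (graphRegion ψ L)) :=
    disjoint_iff_inter_eq_empty.2 (not_nonempty_iff_eq_empty.1 hc)
  obtain ⟨a, ha⟩ : ∃ a, ∀ z ∈ gridCubeP c, localDiscrepancy ψ L t z = a := by
    rcases subset_or_subset_compl_of_disjoint_frontier (isPreconnected_gridCubeP c) hdisj
      with hA | hA
    · rcases gridCubeP_subset_or_subset_compl_of_notMem_crossingBoxes ht hcross with hbox | hbox
      · exact ⟨1 - targetCDF ψ t, fun z hz => by
          simp [localDiscrepancy, Jstar_eq_inter, hA hz, (hbox hz).1]⟩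
      · exact ⟨-targetCDF ψ t, fun z hz => by
          simpa [localDiscrepancy, Jstar_eq_inter, hA hz] using hbox hz⟩
    · exact ⟨0, fun z hz => localDiscrepancy_eq_zero_of_notMem (hA hz) t⟩
  exact variance_cond_eq_zero_of_forall_mem_eq (measurableSet_gridCubeP c) ha

theorem variance_localDiscrepancy_gridCubeP_le (hmeas : Measurable ψ) {t : Fin d → ℝ}
    (ht : t ≤ 1) (hF : targetCDF ψ t ∈ Icc 0 1) (c : (Fin d → Fin m) × Fin m) :
    Var[localDiscrepancy ψ L t; volume[|gridCubeP c]] ≤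
      1 / 4 * ((cubesMeeting m (frontier (graphRegion ψ L))).indicator (fun _ => 1) c +
        (crossingBoxes c.1).indicator (fun _ => 1) t) := by
  have hquarter := variance_localDiscrepancy_le_quarter (L := L) hmeas hF (volume[|gridCubeP c])
  by_cases hc : c ∈ cubesMeeting m (frontier (graphRegion ψ L)) <;>
  by_cases hcross : t ∈ crossingBoxes c.1
  · simp only [hc, hcross, indicator_of_mem]
    linarith
  · simpa [hc, hcross] using hquarter
  · simpa [hc, hcross] using hquarter
  · simp [hc, hcross, variance_localDiscrepancy_gridCubeP_eq_zero ht hc hcross]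

theorem sum_variance_localDiscrepancy_gridCubeP_le (hmeas : Measurable ψ) {t : Fin d → ℝ}
    (ht : t ≤ 1) (hF : targetCDF ψ t ∈ Icc 0 1) :
    ∑ c : (Fin d → Fin m) × Fin m, Var[localDiscrepancy ψ L t; volume[|gridCubeP c]] ≤
      1 / 4 * (Nat.card (cubesMeeting m (frontier (graphRegion ψ L))) +
        ∑ c : (Fin d → Fin m) × Fin m, (crossingBoxes c.1).indicator (fun _ => 1) t) := by
  refine (Finset.sum_le_sum fun c _ =>
    variance_localDiscrepancy_gridCubeP_le hmeas ht hF c).trans_eq ?_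
  rw [← Finset.mul_sum, Finset.sum_add_distrib, sum_indicator_one_comp_eq_natCard _ fun c => c]

theorem integrable_indicator_crossingBoxes (k : Fin d → Fin m) :
    Integrable ((crossingBoxes k).indicator fun _ => (1 : ℝ)) (volume.restrict (Icc 0 1)) :=
  (integrable_const 1).indicator (measurableSet_crossingBoxes k)

theorem integral_sum_indicator_crossingBoxes (hm : 0 < m) :
    ∫ t in Icc 0 1, ∑ c : (Fin d → Fin m) × Fin m,
        (crossingBoxes c.1).indicator (fun _ => (1 : ℝ)) t =
      m * (((m + 1) / 2) ^ d - ((m - 1) / 2) ^ d) := by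
  rw [integral_finsetSum _ fun c _ => integrable_indicator_crossingBoxes c.1,
    ← sum_volume_real_crossingBoxes hm, Fintype.sum_prod_type, Finset.mul_sum]
  refine Finset.sum_congr rfl fun k _ => ?_
  simp [integral_indicator_const, measurableSet_crossingBoxes,
    inter_eq_left.2 (crossingBoxes_subset_Icc k)]

theorem integral_scaledSqDiscrepancy_eq_integral_sum_variance (hmeas : Measurable ψ) (hL : 0 < L)
    (hψ : MapsTo ψ (Icc 0 1) (Icc 0 L)) (hC : ∫ z in Icc 0 1, ψ z ≠ 0) (hm : 0 < m) :
    ∫ ω, scaledSqDiscrepancy ψ L ω ∂stratifiedMeasure d m =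
      ∫ t in Icc 0 1, ∑ c : (Fin d → Fin m) × Fin m,
        Var[localDiscrepancy ψ L t; volume[|gridCubeP c]] := by
  have hbound : ∀ᵐ t ∂volume.restrict (Icc 0 1), ∀ (_ : (Fin d → Fin m) × Fin m) z,
      |localDiscrepancy ψ L t z| ≤ 1 := by
    filter_upwards [ae_restrict_mem measurableSet_Icc] with t ht _ z
    have hF := targetCDF_mem_Icc_of_mapsTo hmeas hψ ht
    obtain ⟨hlower, hupper⟩ := localDiscrepancy_mem_Icc (L := L) hF z
    obtain ⟨h0, h1⟩ := hF
    exact abs_le.2 ⟨by linarith, by linarith⟩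
  have hmean : ∀ᵐ t ∂volume.restrict (Icc 0 1), ∑ c : (Fin d → Fin m) × Fin m,
      ∫ z, localDiscrepancy ψ L t z ∂volume[|gridCubeP c] = 0 := by
    filter_upwards [ae_restrict_mem measurableSet_Icc] with t ht
    have hsupp : ∀ z ∉ Icc 0 1, localDiscrepancy ψ L t z = 0 := fun z hz =>
      localDiscrepancy_eq_zero_of_notMem (fun hA => hz (graphRegion_subset_Icc hA)) t
    rw [sum_integral_cond_gridCubeP hm (integrable_localDiscrepancy hmeas t) hsupp,
      integral_localDiscrepancy_eq_zero hmeas hL hψ hC ht, mul_zero]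
  simp only [scaledSqDiscrepancy_eq_integral, stratifiedMeasure_eq_pi_cond]
  exact integral_integral_sq_sum_pi_eq
    (fun _ => measurable_uncurry_localDiscrepancy hmeas) hbound hmean

theorem integral_scaledSqDiscrepancy_le (hmeas : Measurable ψ) (hL : 0 < L)
    (hψ : MapsTo ψ (Icc 0 1) (Icc 0 L)) (hC : ∫ z in Icc 0 1, ψ z ≠ 0) (hm : 0 < m) :
    ∫ ω, scaledSqDiscrepancy ψ L ω ∂stratifiedMeasure d m ≤
      1 / 4 * ((m : ℝ) ^ (d + 1) *
          volume.real (euclNbhdP (frontier (graphRegion ψ L)) (√(d + 1) / m)) +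
        m * (((m + 1) / 2) ^ d - ((m - 1) / 2) ^ d)) := by
  have hfrontier : Bornology.IsBounded (frontier (graphRegion ψ L)) :=
    isBounded_graphRegion.closure.subset frontier_subset_closure
  let E := cubesMeeting m (frontier (graphRegion ψ L))
  have hcross : Integrable (fun t => ∑ c : (Fin d → Fin m) × Fin m,
      (crossingBoxes c.1).indicator (fun _ => (1 : ℝ)) t) (volume.restrict (Icc 0 1)) :=
    integrable_finsetSum _ fun c _ => integrable_indicator_crossingBoxes c.1
  rw [integral_scaledSqDiscrepancy_eq_integral_sum_variance hmeas hL hψ hC hm]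
  calc ∫ t in Icc 0 1, ∑ c : (Fin d → Fin m) × Fin m,
        Var[localDiscrepancy ψ L t; volume[|gridCubeP c]]
      ≤ ∫ t in Icc 0 1, 1 / 4 * (Nat.card E + ∑ c : (Fin d → Fin m) × Fin m,
          (crossingBoxes c.1).indicator (fun _ => (1 : ℝ)) t) := by
        refine integral_mono_of_nonneg (ae_of_all _ fun t => Finset.sum_nonneg fun c _ =>
          variance_nonneg _ _) (((integrable_const _).add hcross).const_mul _) ?_
        filter_upwards [ae_restrict_mem measurableSet_Icc] with t ht
        exact sum_variance_localDiscrepancy_gridCubeP_le hmeas ht.2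
          (targetCDF_mem_Icc_of_mapsTo hmeas hψ ht)
    _ = 1 / 4 * (Nat.card E + m * (((m + 1) / 2) ^ d - ((m - 1) / 2) ^ d)) := by
        rw [integral_const_mul, integral_add (integrable_const _) hcross,
          integral_sum_indicator_crossingBoxes hm]
        simp
    _ ≤ _ := by
        gcongr
        exact natCard_cubesMeeting_le hm hfrontier

end Stratified

/-- **Expected squared `L₂` discrepancy of the stratified acceptance-rejection sampler**
(the `q = 2` case of Theorem 2 of the paper, with `s = d+1`):
`E[N² L_{2,N,ψ}²] ≤ 3 √s M_A m^{s-1}` for all large `m`, where the number of accepted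
points is `N(ω) = #{c : ω_c ∈ A}` and `∑_c 1_{J_t*}(ω_c) = ∑_n 1_{[0,t)}(y_n)` is the
counting function of the projected accepted points. -/
theorem expected_L2_discrepancy_stratified (d : ℕ) (hd : 1 ≤ d)
    (L : ℝ) (hL : 0 < L) (ψ : (Fin d → ℝ) → ℝ) (hmeas : Measurable ψ)
    (hψ0 : ∀ z ∈ Icc (0 : Fin d → ℝ) 1, 0 ≤ ψ z)
    (hψL : ∀ z ∈ Icc (0 : Fin d → ℝ) 1, ψ z ≤ L)
    (C : ℝ) (hC : C = ∫ z in Icc (0 : Fin d → ℝ) 1, ψ z) (hCpos : 0 < C)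
    (MA : ℝ) (hMApos : 0 < MA) (hMink : HasMinkowskiContentP (graphRegion ψ L) MA) :
    ∃ m₀ : ℕ, ∀ m : ℕ, m₀ ≤ m →
      (∫ ω, ((Nat.card {c : (Fin d → Fin m) × Fin m // ω c ∈ graphRegion ψ L} : ℝ) ^ 2
            * ∫ t in Icc (0 : Fin d → ℝ) 1,
                |(1 / (Nat.card {c : (Fin d → Fin m) × Fin m // ω c ∈ graphRegion ψ L} : ℝ))
                    * (∑ c, (Jstar ψ L t).indicator (fun _ => (1 : ℝ)) (ω c))
                  - (1 / C) * ∫ z in lowerBox t, ψ z| ^ 2)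
          ∂(stratifiedMeasure d m))
        ≤ 3 * Real.sqrt (d + 1) * MA * (m : ℝ) ^ d := by
  subst hC
  have hψ : MapsTo ψ (Icc 0 1) (Icc 0 L) := fun z hz => ⟨hψ0 z hz, hψL z hz⟩
  have hMA : 1 ≤ MA := hMink.one_le_of_Icc_prod_zero_subset isBounded_graphRegion
    (Icc_prod_zero_subset_frontier_graphRegion hψ0)
  have hsqrt : 1 ≤ √((d : ℝ) + 1) := Real.one_le_sqrt.2 (by simp)
  have hvol := hMink.eventually_volume_euclNbhdP_le (K := 2 * MA) (by linarith)
    (zero_lt_one.trans_le hsqrt)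
  obtain ⟨m₀, hm₀⟩ := eventually_atTop.1 (hvol.and (eventually_ge_atTop 2))
  refine ⟨m₀, fun m hm => ?_⟩
  obtain ⟨hnbhd, hm2⟩ := hm₀ m hm
  have hm' : (2 : ℝ) ≤ m := by exact_mod_cast hm2
  calc ∫ ω, scaledSqDiscrepancy ψ L ω ∂stratifiedMeasure d m
      ≤ 1 / 4 * ((m : ℝ) ^ (d + 1) *
          volume.real (euclNbhdP (frontier (graphRegion ψ L)) (√(d + 1) / m)) +
        m * (((m + 1) / 2) ^ d - ((m - 1) / 2) ^ d)) :=
        integral_scaledSqDiscrepancy_le hmeas hL hψ hCpos.ne' (by lia)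
    _ ≤ 1 / 4 * ((m : ℝ) ^ (d + 1) * (2 * MA * (2 * (√(d + 1) / m))) + 3 * (m : ℝ) ^ d) := by
        gcongr 1 / 4 * ((m : ℝ) ^ (d + 1) * ?_ + ?_)
        exact mul_half_pow_sub_half_pow_le hm' d
    _ = (√(d + 1) * MA + 3 / 4) * (m : ℝ) ^ d := by field_simp; ring
    _ ≤ 3 * √(d + 1) * MA * (m : ℝ) ^ d := by gcongr; nlinarith
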